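/- arXiv:0709.2466 — 2 statements merged into one kernel-verified Lean document; each statement's English description precedes it below -/
import Mathlib

section
/- Let A be an n×n quaternion matrix all of whose right eigenvalues are real. Then there exist a positive integer s, positive integers n₁,…,n_s with n₁+⋯+n_s = n, real numbers λ₁ ≥ λ₂ ≥ ⋯ ≥ λ_s, and a quaternion unitary matrix U such that F = U*AU is block upper triangular with respect to the partition (n₁,…,n_s), the diagonal blocks are F_{ii} = λ_i·I_{n_i}, and whenever λ_i = λ_{i+1} one has n_i ≥ n_{i+1} and the superdiagonal block F_{i,i+1} (of size n_i×n_{i+1}) is upper triangular with all diagonal entries positive real numbers. -/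
open Matrix
open scoped Quaternion

noncomputable section

/-- A quaternion matrix `U` is unitary if `Uᴴ * U = 1`. -/
def IsUnitaryM {m : Type*} [Fintype m] [DecidableEq m] (U : Matrix m m ℍ[ℝ]) : Prop :=
  Uᴴ * U = 1

/-- `A` and `B` are unitarily similar if `A = Uᴴ * B * U` for some unitary `U`. -/
def UnitarilySimilar {m : Type*} [Fintype m] [DecidableEq m] (A B : Matrix m m ℍ[ℝ]) : Prop :=
  ∃ U : Matrix m m ℍ[ℝ], IsUnitaryM U ∧ A = Uᴴ * B * U

/-- `λ ∈ ℍ` is a right eigenvalue of `A`: `A v = v λ` for some nonzero `v`. -/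
def IsRightEigenvalue {n : ℕ} (A : Matrix (Fin n) (Fin n) ℍ[ℝ]) (lam : ℍ[ℝ]) : Prop :=
  ∃ v : Fin n → ℍ[ℝ], v ≠ 0 ∧ A.mulVec v = fun i => v i * lam

/-- All right eigenvalues of `A` are real. -/
def HasRealSpectrum {n : ℕ} (A : Matrix (Fin n) (Fin n) ℍ[ℝ]) : Prop :=
  ∀ lam : ℍ[ℝ], IsRightEigenvalue A lam → ∃ r : ℝ, lam = (r : ℍ[ℝ])

/-- `psum sz m` is the sum of the first `m` block sizes: the starting index of block `m`. -/
def psum {s : ℕ} (sz : Fin s → ℕ) (m : ℕ) : ℕ :=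
  ∑ t ∈ Finset.range m, if h : t < s then sz ⟨t, h⟩ else 0

/-- Row/column index `r` belongs to the `i`-th diagonal block of the partition `sz`. -/
def InBlock {s : ℕ} (sz : Fin s → ℕ) (i : Fin s) (r : ℕ) : Prop :=
  psum sz i ≤ r ∧ r < psum sz ((i : ℕ) + 1)

/-- The strengthened Schur form (for real eigenvalues): block upper triangular w.r.t. the
partition `sz` with `s` diagonal blocks `lam i • I`, `lam` nonincreasing, and whenever two
consecutive eigenvalues coincide the block sizes do not increase and the superdiagonal block
is upper triangular with positive real diagonal entries. -/
def StrengthenedSchurForm {n : ℕ} (s : ℕ) (sz : Fin s → ℕ) (lam : Fin s → ℝ)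
    (F : Matrix (Fin n) (Fin n) ℍ[ℝ]) : Prop :=
  (∀ i, 0 < sz i) ∧ (∑ i, sz i) = n ∧
  (∀ i j : Fin s, i ≤ j → lam j ≤ lam i) ∧
  (∀ (r c : Fin n) (i j : Fin s), InBlock sz i r → InBlock sz j c → j < i → F r c = 0) ∧
  (∀ (r c : Fin n) (i : Fin s), InBlock sz i r → InBlock sz i c →
      F r c = if r = c then (lam i : ℍ[ℝ]) else 0) ∧
  (∀ (i : Fin s) (h : (i : ℕ) + 1 < s), lam i = lam ⟨(i : ℕ) + 1, h⟩ →
      sz ⟨(i : ℕ) + 1, h⟩ ≤ sz i ∧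
      ∀ r c : Fin n, InBlock sz i r → InBlock sz ⟨(i : ℕ) + 1, h⟩ c →
        ((c : ℕ) - psum sz ((i : ℕ) + 1) < (r : ℕ) - psum sz i → F r c = 0) ∧
        ((c : ℕ) - psum sz ((i : ℕ) + 1) = (r : ℕ) - psum sz i →
          ∃ b : ℝ, 0 < b ∧ F r c = (b : ℍ[ℝ])))

/-!
Let `μ` be the largest right eigenvalue of `A`. An orthonormal basis that starts with a basis of
`ker (A - μ)` turns `A` into `[[μ I, B], [0, D]]`. The right eigenvalues of `D` are again real and
at most `μ`, so by induction `D` has a strengthened Schur form; a unitary change of basis of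
`ker (A - μ)`, which does not affect `μ I`, makes `B` upper triangular with nonnegative real
diagonal (QR). Since all of `ker (A - μ)` was split off, `B` is injective on `ker (D - μ)`. If `μ`
is also the first eigenvalue of `D`, this kernel contains the first block of basis vectors of
its Schur form, and injectivity of a triangular matrix there means that the block is no larger than
`ker (A - μ)` and that the corresponding diagonal entries of `B` do not vanish.

Right eigenvalues exist because `A` commutes with right multiplication by complex scalars.
-/

section Householder

variable {ι K : Type*} [DecidableEq ι] [DivisionRing K] [StarRing K]

/-- The generalized Householder reflection `1 - w d⁻¹ wᴴ`. The scalar `d` is allowed to be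
non-central: this is what makes it possible to send a vector to any other vector of the same
length, and not just to a multiple of it. -/
def householder (w : ι → K) (d : K) : Matrix ι ι K :=
  1 - vecMulVec w (d⁻¹ • star w)

theorem conjTranspose_householder (w : ι → K) (d : K) :
    (householder w d)ᴴ = householder w (star d) := by
  ext1 i j
  simp [householder, vecMulVec_apply, one_apply, apply_ite star, eq_comm (a := j), mul_assoc]

variable [Fintype ι]

theorem householder_mulVec (w x : ι → K) (d : K) :
    householder w d *ᵥ x = x - MulOpposite.op (d⁻¹ * (star w ⬝ᵥ x)) • w := by
  rw [householder, sub_mulVec, one_mulVec, vecMulVec_mulVec, smul_dotProduct, smul_eq_mul]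

theorem householder_mul_householder (w : ι → K) (d e : K) :
    householder w d * householder w e =
      1 - vecMulVec w ((d⁻¹ + e⁻¹ - d⁻¹ * (star w ⬝ᵥ w) * e⁻¹) • star w) := by
  simp only [householder, Matrix.sub_mul, Matrix.mul_sub, Matrix.one_mul, Matrix.mul_one,
    vecMulVec_mul_vecMulVec, smul_dotProduct, smul_smul, sub_smul, add_smul, vecMulVec_sub,
    vecMulVec_add, smul_eq_mul]
  abel

theorem householder_mem_unitary {w : ι → K} {d : K} (hd : d ≠ 0)
    (hw : d + star d = star w ⬝ᵥ w) : householder w d ∈ unitary (Matrix ι ι K) := by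
  have hd' : star d ≠ 0 := star_ne_zero.2 hd
  have key : (star d)⁻¹ + d⁻¹ - (star d)⁻¹ * (star w ⬝ᵥ w) * d⁻¹ = 0 := by
    rw [← hw, mul_add, inv_mul_cancel₀ hd', add_mul, mul_assoc, mul_inv_cancel₀ hd, mul_one,
      one_mul, sub_self]
  have hmul : star (householder w d) * householder w d = 1 := by
    rw [star_eq_conjTranspose, conjTranspose_householder, householder_mul_householder, key,
      zero_smul, vecMulVec_zero, sub_zero]
  exact Unitary.mem_iff.2 ⟨hmul, mul_eq_one_comm.1 hmul⟩

theorem exists_unitary_mulVec_eq (hK : ∀ w : ι → K, star w ⬝ᵥ w = 0 → w = 0) {x y : ι → K}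
    (hxy : star x ⬝ᵥ x = star y ⬝ᵥ y) :
    ∃ U ∈ unitary (Matrix ι ι K), U *ᵥ x = y ∧
      ∀ z, star (x - y) ⬝ᵥ z = 0 → U *ᵥ z = z := by
  by_cases hne : x = y
  · exact ⟨1, one_mem _, by rw [one_mulVec, hne], fun z _ => one_mulVec z⟩
  set d := star (x - y) ⬝ᵥ x with hd
  have hsum : d + star d = star (x - y) ⬝ᵥ (x - y) := by
    rw [hd, ← star_dotProduct]
    simp only [star_sub, sub_dotProduct, dotProduct_sub, hxy]
    abel
  have hd0 : d ≠ 0 := fun h0 => hne <| sub_eq_zero.1 <| hK _ <| by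
    rw [← hsum, h0, star_zero, add_zero]
  refine ⟨householder (x - y) d, householder_mem_unitary hd0 hsum, ?_, fun z hz => ?_⟩
  · rw [householder_mulVec, inv_mul_cancel₀ hd0, MulOpposite.op_one, one_smul, sub_sub_cancel]
  · rw [householder_mulVec, hz, mul_zero, MulOpposite.op_zero, zero_smul, sub_zero]

end Householder

section DiagonalEntries

variable {K : Type*} [DivisionRing K]

theorem exists_mulVec_eq_zero_of_card_lt {m n : Type*} [Fintype m] [Fintype n]
    (M : Matrix m n K) (h : Fintype.card m < Fintype.card n) : ∃ v ≠ 0, M *ᵥ v = 0 := by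
  -- Columns are a right vector space over `K`, that is, a left one over the opposite ring.
  have hker : LinearMap.ker (Mᵀ.map MulOpposite.op).vecMulLinear ≠ ⊥ :=
    LinearMap.ker_ne_bot_of_finrank_lt (by simpa only [Module.finrank_fintype_fun_eq_card])
  obtain ⟨v, hv, hv0⟩ := Submodule.exists_mem_ne_zero_of_ne_bot hker
  refine ⟨MulOpposite.unop ∘ v, fun h0 => hv0 (funext fun j => ?_), funext fun i => ?_⟩
  · exact MulOpposite.unop_injective (congrFun h0 j)
  · simpa [vecMul, mulVec, dotProduct] using congrArg MulOpposite.unop (congrFun hv i)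

theorem exists_diag_ne_zero_of_upperTriangular {k m : ℕ} {R : Matrix (Fin k) (Fin m) K}
    (hR : ∀ (r : Fin k) (c : Fin m), (c : ℕ) < r → R r c = 0) {c : Fin m}
    (hinj : ∀ v, (∀ j > c, v j = 0) → R *ᵥ v = 0 → v = 0) :
    ∃ h : (c : ℕ) < k, R ⟨c, h⟩ c ≠ 0 := by
  by_contra! hdiag
  let M : Matrix ({r : Fin k // (r : ℕ) < c} ⊕ Finset.Ioi c) (Fin m) K :=
    fromRows (R.submatrix Subtype.val id) ((1 : Matrix _ _ K).submatrix Subtype.val id)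
  have hcard : Fintype.card ({r : Fin k // (r : ℕ) < c} ⊕ Finset.Ioi c) <
      Fintype.card (Fin m) := by
    have h1 : Fintype.card {r : Fin k // (r : ℕ) < c} ≤ c := by
      simpa using Fintype.card_le_of_injective
        (fun r : {r : Fin k // (r : ℕ) < c} => (⟨r.1, r.2⟩ : Fin c))
        fun _ _ h => Subtype.ext (Fin.ext (Fin.mk.inj h))
    rw [Fintype.card_sum, Fintype.card_coe, Fin.card_Ioi, Fintype.card_fin]
    lia
  obtain ⟨v, hv0, hv⟩ := exists_mulVec_eq_zero_of_card_lt M hcard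
  rw [fromRows_mulVec] at hv
  have hvr (r : Fin k) (hr : (r : ℕ) < c) : (R *ᵥ v) r = 0 := congrFun hv (Sum.inl ⟨r, hr⟩)
  have hvc (j : Fin m) (hj : c < j) : v j = 0 := by
    simpa [mulVec, dotProduct, one_apply] using congrFun hv (Sum.inr ⟨j, Finset.mem_Ioi.2 hj⟩)
  refine hv0 (hinj v hvc (funext fun r => ?_))
  rcases lt_or_ge (r : ℕ) c with hr | hr
  · exact hvr r hr
  · rw [mulVec, dotProduct, Pi.zero_apply]
    refine Finset.sum_eq_zero fun j _ => ?_
    rcases lt_trichotomy j c with hj | rfl | hj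
    · rw [hR r j (Fin.lt_def.1 hj |>.trans_le hr), zero_mul]
    · rcases hr.eq_or_lt with h | h
      · rw [show r = ⟨j, h ▸ r.2⟩ from Fin.ext h.symm, hdiag, zero_mul]
      · rw [hR r j h, zero_mul]
    · rw [hvc j hj, mul_zero]

end DiagonalEntries

section Reduction

theorem eq_zero_of_unitary_mulVec_eq_zero {ι R : Type*} [Fintype ι] [DecidableEq ι] [Semiring R]
    [StarRing R] {U : Matrix ι ι R} (hU : U ∈ unitary (Matrix ι ι R)) {v : ι → R}
    (h : U *ᵥ v = 0) : v = 0 := by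
  rw [← one_mulVec v, ← Unitary.star_mul_self_of_mem hU, ← mulVec_mulVec, h, mulVec_zero]

theorem coe_sum_quaternion {ι : Type*} (s : Finset ι) (f : ι → ℝ) :
    ((∑ i ∈ s, f i : ℝ) : ℍ[ℝ]) = ∑ i ∈ s, (f i : ℍ[ℝ]) :=
  map_sum (algebraMap ℝ ℍ[ℝ]) f s

theorem star_dotProduct_self_quaternion {ι : Type*} [Fintype ι] (v : ι → ℍ[ℝ]) :
    star v ⬝ᵥ v = ((∑ i, Quaternion.normSq (v i) : ℝ) : ℍ[ℝ]) := by
  simp only [dotProduct, Pi.star_apply, Quaternion.star_mul_self, coe_sum_quaternion]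

theorem eq_zero_of_star_dotProduct_self_eq_zero {ι : Type*} [Fintype ι] {v : ι → ℍ[ℝ]}
    (h : star v ⬝ᵥ v = 0) : v = 0 := by
  rw [star_dotProduct_self_quaternion, ← Quaternion.coe_zero, Quaternion.coe_inj,
    Finset.sum_eq_zero_iff_of_nonneg fun _ _ => Quaternion.normSq_nonneg] at h
  exact funext fun i => Quaternion.normSq_eq_zero.1 (h i (Finset.mem_univ i))

theorem exists_unitary_mulVec_eq_truncate {ι : Type*} [Fintype ι] [LinearOrder ι] (j : ι)
    (x : ι → ℍ[ℝ]) :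
    ∃ U ∈ unitary (Matrix ι ι ℍ[ℝ]), (∀ z, (∀ i ≥ j, z i = 0) → U *ᵥ z = z) ∧ ∃ t : ℝ, 0 ≤ t ∧
      U *ᵥ x = fun i => if i < j then x i else if i = j then (t : ℍ[ℝ]) else 0 := by
  set t := √(∑ i with ¬i < j, Quaternion.normSq (x i)) with ht
  set y : ι → ℍ[ℝ] := fun i => if i < j then x i else if i = j then (t : ℍ[ℝ]) else 0 with hy
  have hhead : ∑ i with i < j, Quaternion.normSq (y i) =
      ∑ i with i < j, Quaternion.normSq (x i) :=
    Finset.sum_congr rfl fun i hi => by simp only [hy, if_pos ((Finset.mem_filter_univ i).1 hi)]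
  have htail : ∑ i with ¬i < j, Quaternion.normSq (y i) =
      ∑ i with ¬i < j, Quaternion.normSq (x i) := by
    rw [Finset.sum_eq_single_of_mem j (by simp)]
    · simp only [hy, lt_irrefl, if_false, if_true, Quaternion.normSq_coe, ht]
      exact Real.sq_sqrt (Finset.sum_nonneg fun _ _ => Quaternion.normSq_nonneg)
    · intro i hi hij
      simp [hy, (Finset.mem_filter_univ i).1 hi, hij]
  have hnorm : star x ⬝ᵥ x = star y ⬝ᵥ y := by
    rw [star_dotProduct_self_quaternion, star_dotProduct_self_quaternion,
      ← Finset.sum_filter_add_sum_filter_not _ (· < j),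
      ← Finset.sum_filter_add_sum_filter_not Finset.univ (· < j) fun i => Quaternion.normSq (y i),
      hhead, htail]
  obtain ⟨U, hU, hUx, hUz⟩ :=
    exists_unitary_mulVec_eq (fun _ => eq_zero_of_star_dotProduct_self_eq_zero) hnorm
  refine ⟨U, hU, fun z hz => hUz z (Finset.sum_eq_zero fun i _ => ?_), t, Real.sqrt_nonneg _, hUx⟩
  rcases lt_or_ge i j with hi | hi
  · simp [hy, hi]
  · rw [hz i hi, mul_zero]

theorem exists_unitary_mul_upperTriangular {k m : ℕ} (R : Matrix (Fin k) (Fin m) ℍ[ℝ]) :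
    ∃ Q ∈ unitary (Matrix (Fin k) (Fin k) ℍ[ℝ]), ∀ (r : Fin k) (c : Fin m),
      ((c : ℕ) < r → (Q * R) r c = 0) ∧
      ((c : ℕ) = r → ∃ b : ℝ, 0 ≤ b ∧ (Q * R) r c = (b : ℍ[ℝ])) := by
  suffices h : ∀ j ≤ m, ∃ Q ∈ unitary (Matrix (Fin k) (Fin k) ℍ[ℝ]),
      ∀ (r : Fin k) (c : Fin m), (c : ℕ) < j → ((c : ℕ) < r → (Q * R) r c = 0) ∧
        ((c : ℕ) = r → ∃ b : ℝ, 0 ≤ b ∧ (Q * R) r c = (b : ℍ[ℝ])) by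
    obtain ⟨Q, hQ, h⟩ := h m le_rfl
    exact ⟨Q, hQ, fun r c => h r c c.2⟩
  intro j hj
  induction j with
  | zero => exact ⟨1, one_mem _, fun r c hc => absurd hc (Nat.not_lt_zero _)⟩
  | succ j ih =>
    obtain ⟨Q, hQ, h⟩ := ih (Nat.le_of_succ_le hj)
    rcases lt_or_ge j k with hjk | hjk
    swap
    · refine ⟨Q, hQ, fun r c hc => ?_⟩
      rcases (Nat.lt_succ_iff.1 hc).lt_or_eq with hc | hc
      · exact h r c hc
      · constructor <;> intro _ <;> lia
    obtain ⟨H, hH, hfix, t, ht, hHt⟩ :=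
      exists_unitary_mulVec_eq_truncate ⟨j, hjk⟩ fun i => (Q * R) i ⟨j, hj⟩
    have hcol (r : Fin k) (c : Fin m) : (H * Q * R) r c = (H *ᵥ fun i => (Q * R) i c) r := by
      rw [Matrix.mul_assoc, mul_apply, mulVec, dotProduct]
    refine ⟨H * Q, mul_mem hH hQ, fun r c hc => ?_⟩
    rw [hcol]
    rcases (Nat.lt_succ_iff.1 hc).lt_or_eq with hc | hc
    · rw [hfix _ fun i hi => (h i c hc).1 (hc.trans_le hi)]
      exact h r c hc
    · obtain rfl : c = ⟨j, hj⟩ := Fin.ext hc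
      rw [hHt]
      refine ⟨fun hr => ?_, fun hr => ⟨t, ht, ?_⟩⟩
      · simp [Fin.lt_def, Fin.ext_iff, hr.not_gt, hr.ne']
      · simp [Fin.lt_def, Fin.ext_iff, ← hr]

theorem exists_unitary_mul_zero_cols_succ {n k : ℕ} {p : Type*} {M : Matrix p (Fin n) ℍ[ℝ]}
    (hM : ∀ i, ∀ j : Fin n, (j : ℕ) < k → M i j = 0) {v : Fin n → ℍ[ℝ]}
    (hv : ∀ j : Fin n, (j : ℕ) < k → v j = 0) (hv0 : v ≠ 0) (hMv : M *ᵥ v = 0) :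
    k < n ∧ ∃ U ∈ unitary (Matrix (Fin n) (Fin n) ℍ[ℝ]),
      ∀ i, ∀ j : Fin n, (j : ℕ) < k + 1 → (M * U) i j = 0 := by
  have hk : k < n := by
    by_contra hk
    exact hv0 (funext fun j => hv j (j.2.trans_le (not_lt.1 hk)))
  obtain ⟨H, hH, hfix, t, -, hHt⟩ := exists_unitary_mulVec_eq_truncate ⟨k, hk⟩ v
  have hback {x y : Fin n → ℍ[ℝ]} (h : H *ᵥ x = y) : star H *ᵥ y = x := by
    rw [← h, mulVec_mulVec, Unitary.star_mul_self_of_mem hH, one_mulVec]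
  have hHv : H *ᵥ v = Pi.single ⟨k, hk⟩ (t : ℍ[ℝ]) := by
    ext1 i
    simp only [hHt]
    rcases lt_or_ge i ⟨k, hk⟩ with hi | hi
    · rw [if_pos hi, hv i hi, Pi.single_eq_of_ne hi.ne]
    · rw [if_neg hi.not_gt, Pi.single_apply]
  have ht : (t : ℍ[ℝ]) ≠ 0 := fun ht =>
    hv0 (eq_zero_of_unitary_mulVec_eq_zero hH (by rw [hHv, ht, Pi.single_zero]))
  refine ⟨hk, star H, Unitary.star_mem hH, fun i j hj => ?_⟩
  rcases (Nat.lt_succ_iff.1 hj).lt_or_eq with hj | hj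
  · have hsingle : star H *ᵥ Pi.single j 1 = Pi.single j 1 :=
      hback (hfix _ fun i hi => Pi.single_eq_of_ne (Fin.lt_def.2 (hj.trans_le hi)).ne' 1)
    rw [← col_apply (M * star H), ← mulVec_single_one, ← mulVec_mulVec, hsingle,
      mulVec_single_one, col_apply, hM i j hj]
  · obtain rfl : j = ⟨k, hk⟩ := Fin.ext hj
    rw [← hback hHv, mulVec_mulVec, mulVec_single] at hMv
    simpa [ht] using congrFun hMv i

theorem exists_unitary_mul_nullSpace {n : ℕ} {p : Type*} (M : Matrix p (Fin n) ℍ[ℝ]) :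
    ∃ U ∈ unitary (Matrix (Fin n) (Fin n) ℍ[ℝ]), ∃ k ≤ n,
      (∀ i, ∀ j : Fin n, (j : ℕ) < k → (M * U) i j = 0) ∧
      ∀ v : Fin n → ℍ[ℝ], (∀ j : Fin n, (j : ℕ) < k → v j = 0) → (M * U) *ᵥ v = 0 → v = 0 := by
  let S : Set ℕ := {k | k ≤ n ∧ ∃ U ∈ unitary (Matrix (Fin n) (Fin n) ℍ[ℝ]),
    ∀ i, ∀ j : Fin n, (j : ℕ) < k → (M * U) i j = 0}
  have hS : S.Finite := (Set.finite_Iic n).subset fun _ h => h.1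
  obtain ⟨k, ⟨hkn, U, hU, hz⟩, hmax⟩ := hS.exists_maximal ⟨0, Nat.zero_le n, 1, one_mem _, by simp⟩
  refine ⟨U, hU, k, hkn, hz, fun v hv hMv => by_contra fun hv0 => ?_⟩
  obtain ⟨hk, V, hV, hz'⟩ := exists_unitary_mul_zero_cols_succ hz hv hv0 hMv
  have hmem : k + 1 ∈ S := ⟨hk, U * V, mul_mem hU hV, by simpa only [← Matrix.mul_assoc]⟩
  exact (Nat.lt_succ_self k).not_ge (hmax hmem (Nat.le_succ k))

end Reduction

section RightEigenvalues

variable {n : ℕ} {A U : Matrix (Fin n) (Fin n) ℍ[ℝ]}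

theorem isRightEigenvalue_coe_iff {r : ℝ} :
    IsRightEigenvalue A (r : ℍ[ℝ]) ↔ ∃ v ≠ 0, A *ᵥ v = r • v := by
  have hsmul (v : Fin n → ℍ[ℝ]) : (fun i => v i * (r : ℍ[ℝ])) = r • v :=
    funext fun i => Quaternion.mul_coe_eq_smul r (v i)
  simp only [IsRightEigenvalue, hsmul]

theorem IsRightEigenvalue.unitary_conj {lam : ℍ[ℝ]} (h : IsRightEigenvalue A lam)
    (hU : U ∈ unitary (Matrix (Fin n) (Fin n) ℍ[ℝ])) : IsRightEigenvalue (Uᴴ * A * U) lam := by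
  obtain ⟨v, hv, hAv⟩ := h
  have hUv : U *ᵥ Uᴴ *ᵥ v = v := by
    rw [mulVec_mulVec, ← star_eq_conjTranspose, hU.2, one_mulVec]
  refine ⟨Uᴴ *ᵥ v, fun h0 => hv (eq_zero_of_unitary_mulVec_eq_zero (Unitary.star_mem hU) h0), ?_⟩
  rw [← mulVec_mulVec, hUv, ← mulVec_mulVec, hAv]
  exact mulVec_smul Uᴴ (MulOpposite.op lam) v

theorem IsRightEigenvalue.of_unitary_conj {lam : ℍ[ℝ]} (h : IsRightEigenvalue (Uᴴ * A * U) lam)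
    (hU : U ∈ unitary (Matrix (Fin n) (Fin n) ℍ[ℝ])) : IsRightEigenvalue A lam := by
  have hUU : U * Uᴴ = 1 := hU.2
  have hback : (star U)ᴴ * (Uᴴ * A * U) * star U = A := by
    rw [star_eq_conjTranspose, conjTranspose_conjTranspose, Matrix.mul_assoc, Matrix.mul_assoc,
      hUU, Matrix.mul_one, ← Matrix.mul_assoc, hUU, Matrix.one_mul]
  exact hback ▸ h.unitary_conj (Unitary.star_mem hU)

theorem exists_isRightEigenvalue [NeZero n] (A : Matrix (Fin n) (Fin n) ℍ[ℝ]) :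
    ∃ lam : ℍ[ℝ], IsRightEigenvalue A lam := by
  -- `ℂ ⊆ ℍ` acts on column vectors from the right; this action commutes with `A`.
  let φ : ℂ →+* ℍ[ℝ]ᵐᵒᵖ :=
    Quaternion.ofComplex.toRingHom.toOpposite fun x y => (Commute.all x y).map Quaternion.ofComplex
  let : Module ℂ ℍ[ℝ] := Module.compHom _ φ
  have hsmul (c : ℂ) (q : ℍ[ℝ]) : c • q = q * Quaternion.ofComplex c := rfl
  have : IsScalarTower ℝ ℂ ℍ[ℝ] :=
    ⟨fun x y z => by rw [hsmul, hsmul, map_smul, mul_smul_comm]⟩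
  have : SMulCommClass ℂ ℍ[ℝ] ℍ[ℝ] := ⟨fun _ p q => mul_assoc p q _⟩
  have : Module.Finite ℂ ℍ[ℝ] := Module.Finite.of_restrictScalars_finite ℝ ℂ _
  obtain ⟨c, hc⟩ := Module.End.exists_eigenvalue (mulVecBilin ℝ ℂ A)
  obtain ⟨v, hv⟩ := hc.exists_hasEigenvector
  exact ⟨Quaternion.ofComplex c, v, hv.2, hv.apply_eq_smul⟩

theorem HasRealSpectrum.exists_max [NeZero n] (hA : HasRealSpectrum A) :
    ∃ μ : ℝ, IsRightEigenvalue A (μ : ℍ[ℝ]) ∧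
      ∀ r : ℝ, IsRightEigenvalue A (r : ℍ[ℝ]) → r ≤ μ := by
  have hfin : {r : ℝ | IsRightEigenvalue A (r : ℍ[ℝ])}.Finite := by
    refine (Module.End.finite_hasEigenvalue (mulVecBilin ℝ ℝ A)).subset fun r hr => ?_
    obtain ⟨v, hv, hAv⟩ := isRightEigenvalue_coe_iff.1 hr
    exact Module.End.hasEigenvalue_of_hasEigenvector ⟨Module.End.mem_eigenspace_iff.2 hAv, hv⟩
  obtain ⟨lam, hlam⟩ := exists_isRightEigenvalue A
  obtain ⟨r, rfl⟩ := hA lam hlam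
  obtain ⟨μ, hμ, hmax⟩ := hfin.exists_maximal ⟨r, hlam⟩
  exact ⟨μ, hμ, fun r hr => (le_total r μ).elim id (hmax hr)⟩

end RightEigenvalues

section FinBlocks

variable {k m : ℕ} {α : Type*}

/-- The `2 × 2` block matrix with blocks `A`, `B`, `C`, `D`, with rows and columns indexed by
`Fin (k + m)` instead of `Fin k ⊕ Fin m`. -/
def finBlocks (A : Matrix (Fin k) (Fin k) α) (B : Matrix (Fin k) (Fin m) α)
    (C : Matrix (Fin m) (Fin k) α) (D : Matrix (Fin m) (Fin m) α) :
    Matrix (Fin (k + m)) (Fin (k + m)) α :=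
  (fromBlocks A B C D).submatrix finSumFinEquiv.symm finSumFinEquiv.symm

section Entries

variable (A : Matrix (Fin k) (Fin k) α) (B : Matrix (Fin k) (Fin m) α)
  (C : Matrix (Fin m) (Fin k) α) (D : Matrix (Fin m) (Fin m) α)

@[simp] theorem finBlocks_castAdd_castAdd (i j : Fin k) :
    finBlocks A B C D (Fin.castAdd m i) (Fin.castAdd m j) = A i j := by
  simp [finBlocks]

@[simp] theorem finBlocks_castAdd_natAdd (i : Fin k) (j : Fin m) :
    finBlocks A B C D (Fin.castAdd m i) (Fin.natAdd k j) = B i j := by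
  simp [finBlocks]

@[simp] theorem finBlocks_natAdd_castAdd (i : Fin m) (j : Fin k) :
    finBlocks A B C D (Fin.natAdd k i) (Fin.castAdd m j) = C i j := by
  simp [finBlocks]

@[simp] theorem finBlocks_natAdd_natAdd (i j : Fin m) :
    finBlocks A B C D (Fin.natAdd k i) (Fin.natAdd k j) = D i j := by
  simp [finBlocks]

end Entries

theorem conjTranspose_finBlocks [Star α] (A : Matrix (Fin k) (Fin k) α)
    (B : Matrix (Fin k) (Fin m) α) (C : Matrix (Fin m) (Fin k) α) (D : Matrix (Fin m) (Fin m) α) :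
    (finBlocks A B C D)ᴴ = finBlocks Aᴴ Cᴴ Bᴴ Dᴴ := by
  rw [finBlocks, conjTranspose_submatrix, fromBlocks_conjTranspose, finBlocks]

theorem finBlocks_one [Zero α] [One α] :
    finBlocks (1 : Matrix (Fin k) (Fin k) α) 0 0 (1 : Matrix (Fin m) (Fin m) α) = 1 := by
  rw [finBlocks, fromBlocks_one, submatrix_one_equiv]

theorem finBlocks_mul [NonUnitalNonAssocSemiring α] (A A' : Matrix (Fin k) (Fin k) α)
    (B B' : Matrix (Fin k) (Fin m) α) (C C' : Matrix (Fin m) (Fin k) α)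
    (D D' : Matrix (Fin m) (Fin m) α) :
    finBlocks A B C D * finBlocks A' B' C' D' =
      finBlocks (A * A' + B * C') (A * B' + B * D') (C * A' + D * C') (C * B' + D * D') := by
  rw [finBlocks, finBlocks, submatrix_mul_equiv, fromBlocks_multiply, finBlocks]

theorem finBlocks_mulVec_append [NonUnitalNonAssocSemiring α] (A : Matrix (Fin k) (Fin k) α)
    (B : Matrix (Fin k) (Fin m) α) (C : Matrix (Fin m) (Fin k) α) (D : Matrix (Fin m) (Fin m) α)
    (x : Fin k → α) (y : Fin m → α) :
    finBlocks A B C D *ᵥ Fin.append x y = Fin.append (A *ᵥ x + B *ᵥ y) (C *ᵥ x + D *ᵥ y) := by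
  ext1 i
  refine Fin.addCases (fun i => ?_) (fun i => ?_) i <;>
    simp [mulVec, dotProduct, Fin.sum_univ_add]

theorem finBlocks_mem_unitary [Semiring α] [StarRing α] {A : Matrix (Fin k) (Fin k) α}
    {D : Matrix (Fin m) (Fin m) α} (hA : A ∈ unitary (Matrix (Fin k) (Fin k) α))
    (hD : D ∈ unitary (Matrix (Fin m) (Fin m) α)) :
    finBlocks A 0 0 D ∈ unitary (Matrix (Fin (k + m)) (Fin (k + m)) α) := by
  obtain ⟨hA1, hA2⟩ := Unitary.mem_iff.1 hA
  obtain ⟨hD1, hD2⟩ := Unitary.mem_iff.1 hD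
  rw [star_eq_conjTranspose] at hA1 hA2 hD1 hD2
  rw [Unitary.mem_iff, star_eq_conjTranspose, conjTranspose_finBlocks, finBlocks_mul,
    finBlocks_mul]
  simp only [hA1, hA2, hD1, hD2, conjTranspose_zero, Matrix.mul_zero, Matrix.zero_mul, add_zero,
    zero_add, finBlocks_one, and_self]

theorem finBlocks_mulVec_append_zero {S : Type*} [NonUnitalNonAssocSemiring α] [SMulZeroClass S α]
    (A : Matrix (Fin k) (Fin k) α) {B : Matrix (Fin k) (Fin m) α} (C : Matrix (Fin m) (Fin k) α)
    {D : Matrix (Fin m) (Fin m) α} {a : S} {y : Fin m → α} (hB : B *ᵥ y = 0)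
    (hD : D *ᵥ y = a • y) :
    finBlocks A B C D *ᵥ Fin.append 0 y = a • Fin.append 0 y := by
  rw [finBlocks_mulVec_append, mulVec_zero, mulVec_zero, hB, hD, zero_add, zero_add]
  ext1 i
  refine Fin.addCases (fun i => ?_) (fun i => ?_) i <;> simp

theorem exists_eq_finBlocks_of_cols {S : Type*} [Zero α] [One α] [SMulZeroClass S α]
    {F : Matrix (Fin (k + m)) (Fin (k + m)) α} {a : S}
    (h : ∀ i, ∀ j : Fin (k + m), (j : ℕ) < k →
      F i j = (a • (1 : Matrix (Fin (k + m)) (Fin (k + m)) α)) i j) :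
    ∃ B D, F = finBlocks (a • 1) B 0 D := by
  refine ⟨F.submatrix (Fin.castAdd m) (Fin.natAdd k), F.submatrix (Fin.natAdd k) (Fin.natAdd k), ?_⟩
  ext1 i j
  refine Fin.addCases (fun j => ?_) (fun j => ?_) j
  · rw [h i _ j.2]
    refine Fin.addCases (fun i => ?_) (fun i => ?_) i
    · simp [one_apply, Fin.ext_iff]
    · have hne : k + (i : ℕ) ≠ j := by lia
      simp [one_apply, Fin.ext_iff, hne]
  · refine Fin.addCases (fun i => ?_) (fun i => ?_) i <;> simp

theorem IsRightEigenvalue.finBlocks_of_ne {μ : ℝ} {B : Matrix (Fin k) (Fin m) ℍ[ℝ]}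
    {D : Matrix (Fin m) (Fin m) ℍ[ℝ]} {lam : ℍ[ℝ]} (h : IsRightEigenvalue D lam)
    (hne : lam ≠ μ) : IsRightEigenvalue (finBlocks (μ • 1) B 0 D) lam := by
  obtain ⟨y, hy, hev⟩ := h
  have hne' : lam - μ ≠ 0 := sub_ne_zero.2 hne
  -- The upper part `x` has to solve `μ x + B y = x lam`.
  let x : Fin k → ℍ[ℝ] := fun i => (B *ᵥ y) i * (lam - μ)⁻¹
  have hx (i) : μ • x i + (B *ᵥ y) i = x i * lam := by
    have hxi : x i * (lam - μ) = (B *ᵥ y) i := by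
      rw [mul_assoc, inv_mul_cancel₀ hne', mul_one]
    rw [← hxi, ← Quaternion.mul_coe_eq_smul, mul_sub, add_sub_cancel]
  refine ⟨Fin.append x y, fun h0 => hy (funext fun i => ?_), ?_⟩
  · simpa using congrFun h0 (Fin.natAdd k i)
  · rw [finBlocks_mulVec_append]
    ext1 i
    refine Fin.addCases (fun i => ?_) (fun i => ?_) i
    · simpa [smul_mulVec] using hx i
    · simp [hev]

end FinBlocks

section Psum

variable {s : ℕ} (k : ℕ) (sz : Fin s → ℕ)

theorem psum_cons_succ (j : ℕ) :
    psum (Fin.cons k sz : Fin (s + 1) → ℕ) (j + 1) = k + psum sz j := by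
  rw [psum, Finset.sum_range_succ', add_comm]
  congr 1
  refine Finset.sum_congr rfl fun t _ => ?_
  by_cases h : t < s
  · rw [dif_pos h, dif_pos (Nat.succ_lt_succ h)]
    exact Fin.cons_succ (α := fun _ => ℕ) k sz ⟨t, h⟩
  · rw [dif_neg h, dif_neg (by lia)]

theorem psum_eq_sum : psum sz s = ∑ i, sz i := by
  rw [psum, Finset.sum_range]
  exact Finset.sum_congr rfl fun i _ => dif_pos i.2

theorem inBlock_zero_iff (h : 0 < s) {r : ℕ} : InBlock sz ⟨0, h⟩ r ↔ r < sz ⟨0, h⟩ := by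
  simp [InBlock, psum, h]

variable {k sz}

theorem inBlock_cons_zero_iff {m : ℕ} {r : Fin (k + m)} :
    InBlock (Fin.cons k sz : Fin (s + 1) → ℕ) 0 r ↔ ∃ r' : Fin k, Fin.castAdd m r' = r := by
  refine (inBlock_zero_iff (Fin.cons k sz : Fin (s + 1) → ℕ) s.succ_pos).trans ?_
  exact ⟨fun hr => ⟨⟨r, hr⟩, rfl⟩, by rintro ⟨r', rfl⟩; exact r'.2⟩

theorem inBlock_cons_succ_iff {m : ℕ} {i : Fin s} {r : Fin (k + m)} :
    InBlock (Fin.cons k sz : Fin (s + 1) → ℕ) i.succ r ↔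
      ∃ r' : Fin m, Fin.natAdd k r' = r ∧ InBlock sz i r' := by
  rw [InBlock, Fin.val_succ, psum_cons_succ, psum_cons_succ]
  refine Fin.addCases (fun r => ?_) (fun r => ?_) r
  · refine iff_of_false (fun h => ?_) ?_
    · exact absurd (Nat.le_of_add_right_le h.1) (Nat.not_le.2 r.2)
    · rintro ⟨r', hr', -⟩
      exact absurd (congrArg Fin.val hr') (r.2.trans_le (Nat.le_add_right k r')).ne'
  · simp [InBlock]

theorem exists_inBlock {r : ℕ} (h : r < ∑ i, sz i) : ∃ i, InBlock sz i r := by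
  suffices H : ∀ j ≤ s, r < psum sz j → ∃ i, InBlock sz i r from
    H s le_rfl (by rwa [psum_eq_sum])
  intro j hj hr
  induction j with
  | zero => exact absurd hr (Nat.not_lt_zero r)
  | succ j ih =>
    rcases lt_or_ge r (psum sz j) with hlt | hge
    · exact ih (Nat.le_of_succ_le hj) hlt
    · exact ⟨⟨j, hj⟩, hge, hr⟩

end Psum

section SchurForm

/-- The first `d` columns of `R` form an upper triangular matrix with positive real diagonal
entries, `d` of them: in the superdiagonal block of a strengthened Schur form, `d` is the size of
the following diagonal block, and the remaining columns belong to later blocks. -/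
def IsPosUpperTriangular {k m : ℕ} (d : ℕ) (R : Matrix (Fin k) (Fin m) ℍ[ℝ]) : Prop :=
  d ≤ k ∧ ∀ (r : Fin k) (c : Fin m), (c : ℕ) < d → ((c : ℕ) < r → R r c = 0) ∧
    ((c : ℕ) = r → ∃ b : ℝ, 0 < b ∧ R r c = (b : ℍ[ℝ]))

namespace StrengthenedSchurForm

variable {m s : ℕ} {sz : Fin s → ℕ} {lam : Fin s → ℝ} {F : Matrix (Fin m) (Fin m) ℍ[ℝ]}

theorem size_le (hF : StrengthenedSchurForm s sz lam F) (i : Fin s) : sz i ≤ m :=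
  (Finset.single_le_sum (fun _ _ => Nat.zero_le _) (Finset.mem_univ i)).trans_eq hF.2.1

theorem apply_of_lt_head (hF : StrengthenedSchurForm s sz lam F) (hs : 0 < s) (r : Fin m)
    {c : Fin m} (hc : (c : ℕ) < sz ⟨0, hs⟩) :
    F r c = if r = c then (lam ⟨0, hs⟩ : ℍ[ℝ]) else 0 := by
  obtain ⟨-, hsum, -, hlow, hdiag, -⟩ := hF
  have hc0 : InBlock sz ⟨0, hs⟩ c := (inBlock_zero_iff sz hs).2 hc
  by_cases hrc : r = c
  · subst hrc
    exact hdiag r r _ hc0 hc0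
  obtain ⟨i, hi⟩ := exists_inBlock (r.2.trans_eq hsum.symm)
  rcases Nat.eq_zero_or_pos (i : ℕ) with h0 | hpos
  · obtain rfl : i = ⟨0, hs⟩ := Fin.ext h0
    exact hdiag r c _ hi hc0
  · rw [if_neg hrc, hlow r c i _ hi hc0 hpos]

theorem mulVec_of_head (hF : StrengthenedSchurForm s sz lam F) (hs : 0 < s) {v : Fin m → ℍ[ℝ]}
    (hv : ∀ j : Fin m, sz ⟨0, hs⟩ ≤ j → v j = 0) : F *ᵥ v = lam ⟨0, hs⟩ • v := by
  ext1 r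
  have hterm (j : Fin m) : F r j * v j = (if r = j then (lam ⟨0, hs⟩ : ℍ[ℝ]) else 0) * v j := by
    rcases lt_or_ge (j : ℕ) (sz ⟨0, hs⟩) with hj | hj
    · rw [hF.apply_of_lt_head hs r hj]
    · rw [hv j hj, mul_zero, mul_zero]
  simp [mulVec, dotProduct, hterm, Quaternion.coe_mul_eq_smul]

theorem isRightEigenvalue_head (hF : StrengthenedSchurForm s sz lam F) (hs : 0 < s) :
    IsRightEigenvalue F (lam ⟨0, hs⟩ : ℍ[ℝ]) := by
  have hsz : 0 < sz ⟨0, hs⟩ := hF.1 _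
  refine isRightEigenvalue_coe_iff.2
    ⟨Pi.single ⟨0, hsz.trans_le (hF.size_le _)⟩ 1, by simp, hF.mulVec_of_head hs fun j hj => ?_⟩
  exact Pi.single_eq_of_ne (Fin.lt_def.2 (hsz.trans_le hj)).ne' 1

variable {k : ℕ} {μ : ℝ} {R : Matrix (Fin k) (Fin m) ℍ[ℝ]}

theorem cons_lower (hF : StrengthenedSchurForm s sz lam F) (r c : Fin (k + m))
    (i j : Fin (s + 1)) (hr : InBlock (Fin.cons k sz : Fin (s + 1) → ℕ) i r)
    (hc : InBlock (Fin.cons k sz : Fin (s + 1) → ℕ) j c) (hji : j < i) :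
    finBlocks (μ • 1) R 0 F r c = 0 := by
  cases i using Fin.cases with
  | zero => exact absurd hji (Fin.not_lt_zero j)
  | succ i =>
    obtain ⟨r, rfl, hr'⟩ := inBlock_cons_succ_iff.1 hr
    cases j using Fin.cases with
    | zero =>
      obtain ⟨c, rfl⟩ := inBlock_cons_zero_iff.1 hc
      rw [finBlocks_natAdd_castAdd, Matrix.zero_apply]
    | succ j =>
      obtain ⟨c, rfl, hc'⟩ := inBlock_cons_succ_iff.1 hc
      rw [finBlocks_natAdd_natAdd]
      exact hF.2.2.2.1 r c i j hr' hc' (Fin.succ_lt_succ_iff.1 hji)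

theorem cons_diag (hF : StrengthenedSchurForm s sz lam F) (r c : Fin (k + m)) (i : Fin (s + 1))
    (hr : InBlock (Fin.cons k sz : Fin (s + 1) → ℕ) i r)
    (hc : InBlock (Fin.cons k sz : Fin (s + 1) → ℕ) i c) :
    finBlocks (μ • 1) R 0 F r c =
      if r = c then ((Fin.cons μ lam : Fin (s + 1) → ℝ) i : ℍ[ℝ]) else 0 := by
  cases i using Fin.cases with
  | zero =>
    obtain ⟨r, rfl⟩ := inBlock_cons_zero_iff.1 hr
    obtain ⟨c, rfl⟩ := inBlock_cons_zero_iff.1 hc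
    simp [one_apply, ← Quaternion.coe_mul_eq_smul]
  | succ i =>
    obtain ⟨r, rfl, hr'⟩ := inBlock_cons_succ_iff.1 hr
    obtain ⟨c, rfl, hc'⟩ := inBlock_cons_succ_iff.1 hc
    simpa using hF.2.2.2.2.1 r c i hr' hc'

theorem cons_superdiag (hF : StrengthenedSchurForm s sz lam F)
    (hR : ∀ h : 0 < s, μ = lam ⟨0, h⟩ → IsPosUpperTriangular (sz ⟨0, h⟩) R)
    (i : Fin s)
    (heq : (Fin.cons μ lam : Fin (s + 1) → ℝ) i.castSucc = lam i) :
    sz i ≤ (Fin.cons k sz : Fin (s + 1) → ℕ) i.castSucc ∧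
      ∀ r c : Fin (k + m), InBlock (Fin.cons k sz : Fin (s + 1) → ℕ) i.castSucc r →
        InBlock (Fin.cons k sz : Fin (s + 1) → ℕ) i.succ c →
        ((c : ℕ) - psum (Fin.cons k sz : Fin (s + 1) → ℕ) (i + 1) <
            (r : ℕ) - psum (Fin.cons k sz : Fin (s + 1) → ℕ) i →
          finBlocks (μ • 1) R 0 F r c = 0) ∧
        ((c : ℕ) - psum (Fin.cons k sz : Fin (s + 1) → ℕ) (i + 1) =
            (r : ℕ) - psum (Fin.cons k sz : Fin (s + 1) → ℕ) i →
          ∃ b : ℝ, 0 < b ∧ finBlocks (μ • 1) R 0 F r c = (b : ℍ[ℝ])) := by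
  obtain ⟨i, hi⟩ := i
  cases i with
  | zero =>
    obtain ⟨hle, hR⟩ := hR hi heq
    refine ⟨hle, fun r c hr hc => ?_⟩
    obtain ⟨r, rfl⟩ := inBlock_cons_zero_iff.1 hr
    obtain ⟨c, rfl, hc'⟩ := inBlock_cons_succ_iff.1 hc
    rw [finBlocks_castAdd_natAdd, psum_cons_succ]
    simpa [psum] using hR r c ((inBlock_zero_iff sz hi).1 hc')
  | succ i =>
    obtain ⟨hle, hF⟩ := hF.2.2.2.2.2 ⟨i, Nat.lt_of_succ_lt hi⟩ hi heq
    refine ⟨hle, fun r c hr hc => ?_⟩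
    obtain ⟨r, rfl, hr'⟩ := inBlock_cons_succ_iff (i := ⟨i, Nat.lt_of_succ_lt hi⟩).1 hr
    obtain ⟨c, rfl, hc'⟩ := inBlock_cons_succ_iff.1 hc
    rw [finBlocks_natAdd_natAdd, psum_cons_succ, psum_cons_succ, Fin.val_natAdd, Fin.val_natAdd,
      Nat.add_sub_add_left, Nat.add_sub_add_left]
    exact hF r c hr' hc'

theorem cons (hF : StrengthenedSchurForm s sz lam F) (hk : 0 < k) (hμ : ∀ i, lam i ≤ μ)
    (hR : ∀ h : 0 < s, μ = lam ⟨0, h⟩ → IsPosUpperTriangular (sz ⟨0, h⟩) R) :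
    StrengthenedSchurForm (s + 1) (Fin.cons k sz) (Fin.cons μ lam)
      (finBlocks (μ • 1) R 0 F) := by
  refine ⟨Fin.cases hk hF.1, by rw [Fin.sum_cons, hF.2.1], ?_, hF.cons_lower, hF.cons_diag,
    fun i h => ?_⟩
  · intro i j hij
    cases i using Fin.cases <;> cases j using Fin.cases
    · exact le_rfl
    · exact hμ _
    · exact absurd hij (Fin.succ_pos _).not_ge
    · exact hF.2.2.1 _ _ (Fin.succ_le_succ_iff.1 hij)
  · exact hF.cons_superdiag hR ⟨i, Nat.lt_of_succ_lt_succ h⟩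

end StrengthenedSchurForm

/-- `A` is unitarily similar to a matrix in strengthened Schur form. -/
def HasSchurForm {n : ℕ} (A : Matrix (Fin n) (Fin n) ℍ[ℝ]) : Prop :=
  ∃ (s : ℕ) (sz : Fin s → ℕ) (lam : Fin s → ℝ), ∃ U ∈ unitary (Matrix (Fin n) (Fin n) ℍ[ℝ]),
    StrengthenedSchurForm s sz lam (Uᴴ * A * U)

theorem HasSchurForm.of_unitary_conj {n : ℕ} {A U : Matrix (Fin n) (Fin n) ℍ[ℝ]}
    (h : HasSchurForm (Uᴴ * A * U)) (hU : U ∈ unitary (Matrix (Fin n) (Fin n) ℍ[ℝ])) :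
    HasSchurForm A := by
  obtain ⟨s, sz, lam, V, hV, hF⟩ := h
  refine ⟨s, sz, lam, U * V, mul_mem hU hV, ?_⟩
  simpa only [conjTranspose_mul, Matrix.mul_assoc] using hF

variable {k m : ℕ} {μ : ℝ} {B : Matrix (Fin k) (Fin m) ℍ[ℝ]} {D : Matrix (Fin m) (Fin m) ℍ[ℝ]}

theorem StrengthenedSchurForm.superdiag_of_injective {s : ℕ} {sz : Fin s → ℕ} {lam : Fin s → ℝ}
    (hD : StrengthenedSchurForm s sz lam D)
    (hB : ∀ (r : Fin k) (c : Fin m), ((c : ℕ) < r → B r c = 0) ∧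
      ((c : ℕ) = r → ∃ b : ℝ, 0 ≤ b ∧ B r c = (b : ℍ[ℝ])))
    (hs : 0 < s) (hinj : ∀ y, B *ᵥ y = 0 → D *ᵥ y = lam ⟨0, hs⟩ • y → y = 0) :
    IsPosUpperTriangular (sz ⟨0, hs⟩) B := by
  have hne (c : Fin m) (hc : (c : ℕ) < sz ⟨0, hs⟩) : ∃ h : (c : ℕ) < k, B ⟨c, h⟩ c ≠ 0 :=
    exists_diag_ne_zero_of_upperTriangular (fun r c => (hB r c).1) fun v hv hBv =>
      hinj v hBv (hD.mulVec_of_head hs fun j hj => hv j (hc.trans_le hj))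
  refine ⟨?_, fun r c hc => ⟨(hB r c).1, fun hcr => ?_⟩⟩
  · by_contra! hk
    obtain ⟨h, -⟩ := hne ⟨k, hk.trans_le (hD.size_le _)⟩ hk
    exact h.false
  · obtain ⟨b, hb, hBb⟩ := (hB r c).2 hcr
    obtain ⟨hck, hBc⟩ := hne c hc
    obtain rfl : ⟨c, hck⟩ = r := Fin.ext hcr
    refine ⟨b, hb.lt_of_ne fun h0 => hBc ?_, hBb⟩
    rw [hBb, ← h0, Quaternion.coe_zero]

theorem HasSchurForm.cons (hD : HasSchurForm D) (hk : 0 < k)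
    (hμ : ∀ r : ℝ, IsRightEigenvalue D (r : ℍ[ℝ]) → r ≤ μ)
    (hinj : ∀ y, B *ᵥ y = 0 → D *ᵥ y = μ • y → y = 0) :
    HasSchurForm (finBlocks (μ • 1) B 0 D) := by
  obtain ⟨s, sz, lam, V, hV, hF⟩ := hD
  have hVV : V * Vᴴ = 1 := hV.2
  obtain ⟨Q, hQ, hQBV⟩ := exists_unitary_mul_upperTriangular (B * V)
  have hQQ : Q * Qᴴ = 1 := hQ.2
  have hlam (i : Fin s) : lam i ≤ μ := (hF.2.2.1 ⟨0, i.pos⟩ i (Nat.zero_le _)).trans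
    (hμ _ ((hF.isRightEigenvalue_head i.pos).of_unitary_conj hV))
  have hconj : (finBlocks Qᴴ 0 0 V)ᴴ * finBlocks (μ • 1) B 0 D * finBlocks Qᴴ 0 0 V =
      finBlocks (μ • 1) (Q * (B * V)) 0 (Vᴴ * D * V) := by
    rw [conjTranspose_finBlocks, finBlocks_mul, finBlocks_mul]
    simp [hQQ, Matrix.mul_assoc]
  have hinj' (y) (hBy : (Q * (B * V)) *ᵥ y = 0) (hDy : (Vᴴ * D * V) *ᵥ y = μ • y) : y = 0 := by
    rw [← mulVec_mulVec, ← mulVec_mulVec] at hBy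
    refine eq_zero_of_unitary_mulVec_eq_zero hV
      (hinj _ (eq_zero_of_unitary_mulVec_eq_zero hQ hBy) ?_)
    rw [← mulVec_smul, ← hDy, mulVec_mulVec, mulVec_mulVec, Matrix.mul_assoc,
      ← Matrix.mul_assoc V, hVV, Matrix.one_mul]
  refine ⟨s + 1, Fin.cons k sz, Fin.cons μ lam, finBlocks Qᴴ 0 0 V,
    finBlocks_mem_unitary (Unitary.star_mem hQ) hV, ?_⟩
  rw [hconj]
  exact hF.cons hk hlam fun hs heq => hF.superdiag_of_injective hQBV hs (heq ▸ hinj')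

end SchurForm

theorem exists_unitary_conj_eigenspace {n : ℕ} (A : Matrix (Fin n) (Fin n) ℍ[ℝ]) (μ : ℝ) :
    ∃ U ∈ unitary (Matrix (Fin n) (Fin n) ℍ[ℝ]), ∃ k ≤ n,
      (∀ i, ∀ j : Fin n, (j : ℕ) < k →
        (Uᴴ * A * U) i j = (μ • (1 : Matrix (Fin n) (Fin n) ℍ[ℝ])) i j) ∧
      ∀ v : Fin n → ℍ[ℝ], (∀ j : Fin n, (j : ℕ) < k → v j = 0) →
        (Uᴴ * A * U) *ᵥ v = μ • v → v = 0 := by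
  obtain ⟨U, hU, k, hk, hz, hinj⟩ := exists_unitary_mul_nullSpace (A - μ • 1)
  have hUU : Uᴴ * U = 1 := hU.1
  have hAU : Uᴴ * A * U = Uᴴ * ((A - μ • 1) * U) + μ • 1 := by
    rw [Matrix.sub_mul, Matrix.mul_sub, smul_mul_assoc, Matrix.one_mul, mul_smul_comm, hUU,
      sub_add_cancel, Matrix.mul_assoc]
  refine ⟨U, hU, k, hk, fun i j hj => ?_, fun v hv hAv => hinj v hv ?_⟩
  · rw [hAU, Matrix.add_apply, add_eq_right, mul_apply]
    exact Finset.sum_eq_zero fun l _ => by rw [hz l j hj, mul_zero]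
  · rw [hAU, add_mulVec, smul_mulVec, one_mulVec, add_eq_right] at hAv
    exact eq_zero_of_unitary_mulVec_eq_zero (Unitary.star_mem hU) (by
      rw [star_eq_conjTranspose, mulVec_mulVec, hAv])

theorem HasRealSpectrum.hasSchurForm {n : ℕ} {A : Matrix (Fin n) (Fin n) ℍ[ℝ]}
    (hA : HasRealSpectrum A) : HasSchurForm A := by
  induction n using Nat.strong_induction_on with
  | _ n ih =>
  rcases n.eq_zero_or_pos with rfl | hn
  · exact ⟨0, Fin.elim0, Fin.elim0, 1, one_mem _, fun i => i.elim0, rfl, fun i => i.elim0,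
      fun r => r.elim0, fun r => r.elim0, fun i => i.elim0⟩
  have : NeZero n := ⟨hn.ne'⟩
  obtain ⟨μ, hμ, hmax⟩ := hA.exists_max
  obtain ⟨U, hU, k, hkn, hcols, hinj⟩ := exists_unitary_conj_eigenspace A μ
  have hk : 0 < k := by
    obtain ⟨v, hv, hAv⟩ := isRightEigenvalue_coe_iff.1 (hμ.unitary_conj hU)
    by_contra hk
    exact hv (hinj v (fun j hj => absurd (Nat.zero_le _ |>.trans_lt hj) hk) hAv)
  obtain ⟨m, rfl⟩ := Nat.exists_eq_add_of_le hkn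
  refine HasSchurForm.of_unitary_conj ?_ hU
  obtain ⟨B, D, hblocks⟩ := exists_eq_finBlocks_of_cols hcols
  have hD (lam : ℍ[ℝ]) (h : IsRightEigenvalue D lam) : lam = μ ∨ IsRightEigenvalue A lam :=
    or_iff_not_imp_left.2 fun hne => .of_unitary_conj (hblocks ▸ h.finBlocks_of_ne hne) hU
  rw [hblocks] at hinj ⊢
  refine (ih m (by lia) fun lam h => (hD lam h).elim (⟨μ, ·⟩) (hA lam)).cons hk
    (fun r hr => ?_) fun y hB hDy => ?_
  · exact (hD r hr).elim (fun h => (Quaternion.coe_injective h).le) (hmax r)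
  · have happ := hinj (Fin.append 0 y)
      (fun j hj => Fin.append_left (0 : Fin k → ℍ[ℝ]) y ⟨j, hj⟩)
      (finBlocks_mulVec_append_zero _ _ hB hDy)
    exact funext fun i => by simpa using congrFun happ (Fin.natAdd k i)

/-- **Strengthened Schur theorem for quaternion matrices with real spectrum (existence).**
If all right eigenvalues of `A` are real, then `A` is unitarily similar to a matrix in
strengthened Schur form. -/
theorem strengthened_schur_existence {n : ℕ} (A : Matrix (Fin n) (Fin n) ℍ[ℝ])
    (hA : HasRealSpectrum A) :
    ∃ (s : ℕ) (sz : Fin s → ℕ) (lam : Fin s → ℝ) (U : Matrix (Fin n) (Fin n) ℍ[ℝ]),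
      IsUnitaryM U ∧ StrengthenedSchurForm s sz lam (Uᴴ * A * U) := by
  obtain ⟨s, sz, lam, U, hU, hF⟩ := hA.hasSchurForm
  exact ⟨s, sz, lam, U, hU.1, hF⟩
end
end

section
/- Let A be an n×n quaternion matrix all of whose right eigenvalues are real, and suppose F and F′ are each unitarily similar to A and each has the form: block upper triangular with respect to partitions (n₁,…,n_s) and (n₁′,…,n_{s′}′) respectively, with diagonal blocks λ_i·I_{n_i} (resp. λ_i′·I_{n_i′}) for real numbers λ₁ ≥ ⋯ ≥ λ_s (resp. λ₁′ ≥ ⋯ ≥ λ_{s′}′), such that whenever two consecutive scalars are equal the corresponding block sizes are nonincreasing and the corresponding superdiagonal block is upper triangular with positive real diagonal entries. Then s = s′, and λ_i = λ_i′ and n_i = n_i′ for all i; i.e., the diagonal blocks λ_i·I_{n_i} are uniquely determined by A. -/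
open Matrix
open scoped Quaternion

noncomputable section

/-!
The block sizes and scalars of `F` can be read off from the action of `F` on columns alone. Let
`W k` be the span of the first `k` blocks of coordinates. Since the scalars are nonincreasing,
`lam k` is the largest eigenvalue of the operator induced by `F` modulo `W k`. Positive triangular
superdiagonal blocks have full column rank, so a vector which `F - lam k` sends into `W k` already
lies in `W (k + 1)`: the quotient `W (k + 1) / W k` is the whole eigenspace of `lam k`. These two
facts determine the flag and the scalars recursively, and a similarity carries one such flag to
another.
-/

section GreedyEigenflag

variable {K R V V' : Type*} [CommRing K] [LinearOrder K] [Ring R] [Algebra K R]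
  [AddCommGroup V] [Module R V] [Module K V] [IsScalarTower K R V]
  [AddCommGroup V'] [Module R V'] [Module K V'] [IsScalarTower K R V']

/-- A flag `0 = W 0 < ⋯ < W s = V` of submodules in which `W (i + 1) / W i` is the eigenspace of
the operator induced by `T` on `V / W i` for its largest eigenvalue, which is `lam i`. The flag is
indexed by `ℕ`, and its values beyond `s` are irrelevant. -/
structure IsGreedyEigenflag {s : ℕ} (T : Module.End R V) (lam : Fin s → K)
    (W : ℕ → Submodule R V) : Prop where
  zero : W 0 = ⊥
  last : W s = ⊤
  lt_succ (i : Fin s) : W i < W (i + 1)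
  succ_eq_comap (i : Fin s) : W (i + 1) = (W i).comap (T - algebraMap K _ (lam i))
  comap_le (i : Fin s) {μ : K} : lam i < μ → (W i).comap (T - algebraMap K _ μ) ≤ W i

namespace IsGreedyEigenflag

variable {s s' : ℕ} {T : Module.End R V} {T' : Module.End R V'}
  {lam : Fin s → K} {lam' : Fin s' → K} {W W₁ : ℕ → Submodule R V} {W' : ℕ → Submodule R V'}

theorem eigenvalue_le (hW : IsGreedyEigenflag T lam W) (hW₁ : IsGreedyEigenflag T lam' W₁)
    {i : Fin s} {j : Fin s'} (h : W i = W₁ j) : lam' j ≤ lam i := by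
  by_contra! hlt
  have hle := hW.comap_le i hlt
  rw [h, ← hW₁.succ_eq_comap] at hle
  exact (hW₁.lt_succ j).not_ge hle

theorem eigenvalue_eq (hW : IsGreedyEigenflag T lam W) (hW₁ : IsGreedyEigenflag T lam' W₁)
    {i : Fin s} {j : Fin s'} (h : W i = W₁ j) : lam i = lam' j :=
  le_antisymm (hW₁.eigenvalue_le hW h.symm) (hW.eigenvalue_le hW₁ h)

theorem apply_eq (hW : IsGreedyEigenflag T lam W) (hW₁ : IsGreedyEigenflag T lam' W₁) {k : ℕ}
    (hk : k ≤ s) (hk' : k ≤ s') : W k = W₁ k := by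
  induction k with
  | zero => rw [hW.zero, hW₁.zero]
  | succ k ih =>
    have hWk := ih (Nat.le_of_succ_le hk) (Nat.le_of_succ_le hk')
    rw [hW.succ_eq_comap ⟨k, hk⟩, hW₁.succ_eq_comap ⟨k, hk'⟩,
      hW.eigenvalue_eq hW₁ (i := ⟨k, hk⟩) (j := ⟨k, hk'⟩) hWk, hWk]

theorem length_le (hW : IsGreedyEigenflag T lam W) (hW₁ : IsGreedyEigenflag T lam' W₁) :
    s' ≤ s := by
  by_contra! h
  have hlt := hW₁.lt_succ ⟨s, h⟩
  rw [← hW.apply_eq hW₁ le_rfl h.le, hW.last] at hlt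
  exact not_top_lt hlt

theorem comap_equiv (hW' : IsGreedyEigenflag T' lam' W') (e : V ≃ₗ[R] V')
    (he : T' ∘ₗ e = e ∘ₗ T) : IsGreedyEigenflag T lam' fun k => (W' k).comap (e : V →ₗ[R] V') := by
  have comap_comap (μ : K) (U : Submodule R V') :
      (U.comap (e : V →ₗ[R] V')).comap (T - algebraMap K _ μ) =
        (U.comap (T' - algebraMap K _ μ)).comap (e : V →ₗ[R] V') := by
    ext v
    have hv : T' (e v) = e (T v) := LinearMap.congr_fun he v
    have hμ : e (μ • v) = μ • e v := LinearMap.map_smul_of_tower (e : V →ₗ[R] V') μ v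
    simp [Module.algebraMap_end_apply, hv, hμ]
  refine ⟨?_, ?_, fun i => ?_, fun i => ?_, fun i μ hμ => ?_⟩
  · simp [hW'.zero]
  · simp [hW'.last]
  · exact Submodule.comap_strictMono_of_surjective e.surjective (hW'.lt_succ i)
  · rw [hW'.succ_eq_comap, comap_comap]
  · rw [comap_comap]
    exact Submodule.comap_mono (hW'.comap_le i hμ)

theorem unique_of_equiv (hW : IsGreedyEigenflag T lam W) (hW' : IsGreedyEigenflag T' lam' W')
    (e : V ≃ₗ[R] V') (he : T' ∘ₗ e = e ∘ₗ T) :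
    s = s' ∧ (∀ (i : ℕ) (h : i < s) (h' : i < s'), lam ⟨i, h⟩ = lam' ⟨i, h'⟩) ∧
      ∀ k ≤ s, k ≤ s' → Module.finrank R (W k) = Module.finrank R (W' k) := by
  have hW₁ := hW'.comap_equiv e he
  refine ⟨le_antisymm (hW₁.length_le hW) (hW.length_le hW₁), fun i h h' => ?_, fun k hk hk' => ?_⟩
  · exact hW.eigenvalue_eq hW₁ (hW.apply_eq hW₁ h.le h'.le)
  · rw [hW.apply_eq hW₁ hk hk', Submodule.comap_equiv_eq_map_symm, LinearEquiv.finrank_map_eq]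

theorem unique_of_isConj {T' : Module.End R V} {W' : ℕ → Submodule R V}
    (hW : IsGreedyEigenflag T lam W) (hW' : IsGreedyEigenflag T' lam' W') (hT : IsConj T T') :
    s = s' ∧ (∀ (i : ℕ) (h : i < s) (h' : i < s'), lam ⟨i, h⟩ = lam' ⟨i, h'⟩) ∧
      ∀ k ≤ s, k ≤ s' → Module.finrank R (W k) = Module.finrank R (W' k) := by
  obtain ⟨c, hc⟩ := hT
  exact hW.unique_of_equiv hW' (LinearMap.GeneralLinearGroup.toLinearEquiv c) hc.eq.symm

end IsGreedyEigenflag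

end GreedyEigenflag

section CoordFlag

variable {D ι : Type*} [Semiring D] {s : ℕ}

/-- The flag of right `D`-subspaces of `ι → D` attached to a block map `b : ι → Fin s`: the vectors
supported on the blocks with index less than `k`. Right `D`-spaces are encoded as `Dᵐᵒᵖ`-modules,
since matrices over a noncommutative `D` act on columns by right-linear maps. -/
def coordFlag (D : Type*) [Semiring D] (b : ι → Fin s) (k : ℕ) : Submodule Dᵐᵒᵖ (ι → D) :=
  ⨅ r ∈ {r | k ≤ (b r : ℕ)}, LinearMap.ker (LinearMap.proj r)

variable {b : ι → Fin s}

@[simp]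
theorem mem_coordFlag {k : ℕ} {v : ι → D} :
    v ∈ coordFlag D b k ↔ ∀ r, k ≤ (b r : ℕ) → v r = 0 := by
  simp [coordFlag]

theorem coordFlag_mono : Monotone (coordFlag D b) := fun _ _ hkl _ hv =>
  mem_coordFlag.mpr fun r hr => mem_coordFlag.mp hv r (hkl.trans hr)

theorem coordFlag_zero : coordFlag D b 0 = ⊥ := by
  ext v
  simp [funext_iff]

theorem coordFlag_last : coordFlag D b s = ⊤ := by
  ext v
  simp [(b _).isLt.not_ge]

theorem coordFlag_lt_succ [Nontrivial D] (hb : Function.Surjective b) (i : Fin s) :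
    coordFlag D b i < coordFlag D b (i + 1) := by
  classical
  obtain ⟨r, rfl⟩ := hb i
  refine lt_of_le_not_ge (coordFlag_mono (Nat.le_succ _)) fun hle => ?_
  have hmem : Pi.single r 1 ∈ coordFlag D b (b r + 1) := mem_coordFlag.mpr fun c hc =>
    Pi.single_eq_of_ne (by rintro rfl; omega) _
  simpa using mem_coordFlag.mp (hle hmem) r le_rfl

theorem exists_ne_zero_mem_coordFlag_succ [Finite ι] {k : ℕ} {v : ι → D}
    (hv : v ∉ coordFlag D b k) :
    ∃ r, k ≤ (b r : ℕ) ∧ v r ≠ 0 ∧ v ∈ coordFlag D b (b r + 1) := by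
  obtain ⟨r₀, hr₀, hvr₀⟩ : ∃ r, k ≤ (b r : ℕ) ∧ v r ≠ 0 := by simpa using hv
  obtain ⟨r, hvr, hmax⟩ := (Set.toFinite {r | v r ≠ 0}).exists_maximalFor b _ ⟨r₀, hvr₀⟩
  have hle {c : ι} (hc : v c ≠ 0) : b c ≤ b r := (le_total (b c) (b r)).elim id (hmax hc)
  refine ⟨r, hr₀.trans (hle hvr₀), hvr, mem_coordFlag.mpr fun c hc => ?_⟩
  by_contra hvc
  exact (hle hvc).not_gt hc

theorem finrank_op_self {D : Type*} [DivisionRing D] : Module.finrank Dᵐᵒᵖ D = 1 :=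
  finrank_eq_one 1 one_ne_zero fun w => ⟨MulOpposite.op w, by simp⟩

theorem finrank_coordFlag {D : Type*} [DivisionRing D] [Fintype ι] (k : ℕ) :
    Module.finrank Dᵐᵒᵖ (coordFlag D b k) = Fintype.card {r // (b r : ℕ) < k} := by
  have hdisj : Disjoint {r | (b r : ℕ) < k} {r | k ≤ (b r : ℕ)} :=
    Set.disjoint_left.mpr fun r (hr : (b r : ℕ) < k) => hr.not_ge
  have hunion : Set.univ ⊆ {r | (b r : ℕ) < k} ∪ {r | k ≤ (b r : ℕ)} :=
    fun r _ => lt_or_ge (b r : ℕ) k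
  have : Module.Finite Dᵐᵒᵖ D := Module.finite_of_finrank_eq_succ finrank_op_self
  rw [coordFlag, (LinearMap.iInfKerProjEquiv Dᵐᵒᵖ (fun _ => D) hdisj hunion).finrank_eq,
    Module.finrank_pi_fintype]
  simp [finrank_op_self, Fintype.card_subtype]

theorem card_lt_succ_eq_add [Fintype ι] (i : Fin s) :
    Fintype.card {r // (b r : ℕ) < i + 1} =
      Fintype.card {r // (b r : ℕ) < i} + Fintype.card {r // b r = i} := by
  have hdisj : Disjoint (fun r => (b r : ℕ) < i) (fun r => b r = i) :=
    Pi.disjoint_iff.mpr fun r => Prop.disjoint_iff.mpr (by rintro ⟨h, rfl⟩; omega)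
  rw [← Fintype.card_subtype_or_disjoint _ _ hdisj]
  simp only [Nat.lt_succ_iff_lt_or_eq, Fin.ext_iff]

end CoordFlag

section StaircaseForm

variable {K D ι : Type*} [Field K] [LinearOrder K] [DivisionRing D] [Algebra K D] [Fintype ι]
  [DecidableEq ι] {s : ℕ}

/-- The staircase form of a matrix over a division ring with respect to the block map
`b : ι → Fin s`: block upper triangular, with diagonal blocks `lam i • 1` for nonincreasing central
scalars `lam`, such that consecutive blocks with equal scalars are joined by a superdiagonal block
of full column rank. This relaxes `StrengthenedSchurForm`, whose normalization of the superdiagonal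
blocks matters for uniqueness only through their rank. -/
structure IsStaircaseForm (b : ι → Fin s) (lam : Fin s → K) (F : Matrix ι ι D) : Prop where
  surjective : Function.Surjective b
  antitone : Antitone lam
  blockTriangular : F.BlockTriangular b
  toSquareBlock_eq (i : Fin s) : F.toSquareBlock b i = lam i • 1
  injective_mulVec (i : Fin s) (h : (i : ℕ) + 1 < s) : lam i = lam ⟨i + 1, h⟩ →
    Function.Injective (F.toBlock (b · = i) (b · = ⟨i + 1, h⟩)).mulVec

namespace IsStaircaseForm

variable {b : ι → Fin s} {lam : Fin s → K} {F : Matrix ι ι D}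

theorem apply_eq (hF : IsStaircaseForm b lam F) {r c : ι} (h : b c ≤ b r) :
    F r c = lam (b r) • (1 : Matrix ι ι D) r c := by
  rcases h.lt_or_eq with hlt | heq
  · have hrc : r ≠ c := by rintro rfl; exact hlt.false
    simp [hF.blockTriangular hlt, hrc]
  · simpa [Matrix.toSquareBlock_def, Matrix.one_apply] using
      congr_fun₂ (hF.toSquareBlock_eq (b r)) ⟨r, rfl⟩ ⟨c, heq⟩

theorem mulVec_apply (hF : IsStaircaseForm b lam F) {v : ι → D} {r : ι}
    (hv : v ∈ coordFlag D b (b r + 1)) : (F *ᵥ v) r = lam (b r) • v r := by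
  have hterm (c : ι) : F r c * v c = lam (b r) • ((1 : Matrix ι ι D) r c * v c) := by
    rcases le_or_gt (b c) (b r) with hle | hlt
    · rw [hF.apply_eq hle, smul_mul_assoc]
    · simp [mem_coordFlag.mp hv c hlt]
  calc (F *ᵥ v) r = lam (b r) • ((1 : Matrix ι ι D) *ᵥ v) r := by
        simp only [Matrix.mulVec, dotProduct, hterm, Finset.smul_sum]
    _ = lam (b r) • v r := by rw [Matrix.one_mulVec]

theorem eigenvalue_eq_of_ne_zero (hF : IsStaircaseForm b lam F) {v : ι → D} {r : ι} {μ : K}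
    (hv : v ∈ coordFlag D b (b r + 1)) (hvr : v r ≠ 0) (h : (F *ᵥ v - μ • v) r = 0) :
    lam (b r) = μ := by
  rw [Pi.sub_apply, hF.mulVec_apply hv, Pi.smul_apply, ← sub_smul] at h
  exact sub_eq_zero.mp ((smul_eq_zero.mp h).resolve_right hvr)

theorem toBlock_mulVec (hF : IsStaircaseForm b lam F) {v : ι → D} {i : Fin s}
    (hi : (i : ℕ) + 1 < s) (hv : v ∈ coordFlag D b (i + 2)) (r : {r // b r = i}) :
    (F.toBlock (b · = i) (b · = ⟨i + 1, hi⟩) *ᵥ fun c => v c) r = (F *ᵥ v - lam i • v) r := by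
  obtain ⟨r, rfl⟩ := r
  have hterm (c : ι) : (F - lam (b r) • 1) r c * v c =
      if b c = ⟨b r + 1, hi⟩ then F r c * v c else 0 := by
    split_ifs with hc
    · have hrc : r ≠ c := by rintro rfl; simp [Fin.ext_iff] at hc
      simp [hrc]
    · rcases le_or_gt (b c) (b r) with hle | hlt
      · rw [Matrix.sub_apply, hF.apply_eq hle, Matrix.smul_apply, sub_self, zero_mul]
      · rw [mem_coordFlag.mp hv c (by simp only [Fin.ext_iff] at hc; omega), mul_zero]
  calc _ = ∑ c with b c = ⟨b r + 1, hi⟩, F r c * v c :=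
        (Finset.sum_subtype _ (by simp) fun c => F r c * v c).symm
    _ = ((F - lam (b r) • 1) *ᵥ v) r := by
        simp only [Matrix.mulVec, dotProduct, hterm, Finset.sum_filter]
    _ = (F *ᵥ v - lam (b r) • v) r := by
        rw [Matrix.sub_mulVec, Matrix.smul_mulVec, Matrix.one_mulVec]

theorem mem_coordFlag_of_lt (hF : IsStaircaseForm b lam F) {v : ι → D} {i : Fin s} {μ : K}
    (hμ : lam i < μ) (h : F *ᵥ v - μ • v ∈ coordFlag D b i) : v ∈ coordFlag D b i := by
  by_contra hv
  obtain ⟨r, hir, hvr, hvmem⟩ := exists_ne_zero_mem_coordFlag_succ hv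
  have heq : lam (b r) = μ := hF.eigenvalue_eq_of_ne_zero hvmem hvr (mem_coordFlag.mp h r hir)
  exact (hF.antitone hir).not_gt (heq ▸ hμ)

theorem mem_coordFlag_succ (hF : IsStaircaseForm b lam F) {v : ι → D} {i : Fin s}
    (h : F *ᵥ v - lam i • v ∈ coordFlag D b i) : v ∈ coordFlag D b (i + 1) := by
  by_contra hv
  obtain ⟨r, hir, hvr, hvmem⟩ := exists_ne_zero_mem_coordFlag_succ hv
  obtain ⟨j, hj, hbr⟩ : ∃ (j : Fin s) (hj : (j : ℕ) + 1 < s), b r = ⟨j + 1, hj⟩ :=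
    ⟨⟨b r - 1, by omega⟩, by dsimp only; omega, Fin.ext (by dsimp only; omega)⟩
  have hlam_succ : lam (b r) = lam i :=
    hF.eigenvalue_eq_of_ne_zero hvmem hvr (mem_coordFlag.mp h r ((Nat.le_succ _).trans hir))
  rw [hbr] at hir hvmem hlam_succ
  have hij : i ≤ j := Nat.le_of_succ_le_succ hir
  have hlam : lam j = lam i := le_antisymm (hF.antitone hij)
    (hlam_succ.symm.trans_le (hF.antitone (Fin.mk_le_mk.mpr (Nat.le_succ _))))
  have hblock : F.toBlock (b · = j) (b · = ⟨j + 1, hj⟩) *ᵥ (fun c => v c) = 0 := funext fun c => by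
    rw [hF.toBlock_mulVec hj hvmem, hlam]
    exact mem_coordFlag.mp h c (hij.trans_eq c.2.symm)
  have hzero := hF.injective_mulVec j hj (hlam.trans hlam_succ.symm)
    (hblock.trans (Matrix.mulVec_zero _).symm)
  exact hvr (congr_fun hzero ⟨r, hbr⟩)

theorem sub_mem_coordFlag (hF : IsStaircaseForm b lam F) {v : ι → D} {i : Fin s}
    (hv : v ∈ coordFlag D b (i + 1)) : F *ᵥ v - lam i • v ∈ coordFlag D b i := by
  refine mem_coordFlag.mpr fun r hr => ?_
  have hvr : v ∈ coordFlag D b (b r + 1) := coordFlag_mono (Nat.succ_le_succ hr) hv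
  rw [Pi.sub_apply, hF.mulVec_apply hvr, Pi.smul_apply]
  rcases hr.lt_or_eq with hlt | heq
  · simp [mem_coordFlag.mp hv r hlt]
  · rw [Fin.ext heq, sub_self]

theorem isGreedyEigenflag (hF : IsStaircaseForm b lam F) :
    IsGreedyEigenflag (Module.toModuleEnd Dᵐᵒᵖ (ι → D) F) lam (coordFlag D b) where
  zero := coordFlag_zero
  last := coordFlag_last
  lt_succ := coordFlag_lt_succ hF.surjective
  succ_eq_comap _ := le_antisymm (fun _ => hF.sub_mem_coordFlag) (fun _ => hF.mem_coordFlag_succ)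
  comap_le _ _ hμ _ := hF.mem_coordFlag_of_lt hμ

end IsStaircaseForm

theorem strengthened_schur_uniqueness_general {s' : ℕ} {b : ι → Fin s} {b' : ι → Fin s'}
    {lam : Fin s → K} {lam' : Fin s' → K} {F F' : Matrix ι ι D} (hFF' : IsConj F F')
    (hF : IsStaircaseForm b lam F) (hF' : IsStaircaseForm b' lam' F') :
    s = s' ∧ ∀ (i : ℕ) (h : i < s) (h' : i < s'), lam ⟨i, h⟩ = lam' ⟨i, h'⟩ ∧
      Fintype.card {r // b r = ⟨i, h⟩} = Fintype.card {r // b' r = ⟨i, h'⟩} := by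
  obtain ⟨hs, hlam, hrank⟩ := hF.isGreedyEigenflag.unique_of_isConj hF'.isGreedyEigenflag
    ((Module.toModuleEnd Dᵐᵒᵖ (ι → D)).toMonoidHom.map_isConj hFF')
  simp only [finrank_coordFlag] at hrank
  refine ⟨hs, fun i h h' => ⟨hlam i h h', ?_⟩⟩
  have hcard := hrank (i + 1) h h'
  rw [card_lt_succ_eq_add ⟨i, h⟩, card_lt_succ_eq_add ⟨i, h'⟩, hrank i h.le h'.le] at hcard
  exact Nat.add_left_cancel hcard

end StaircaseForm

theorem mulVec_injective_of_forall_exists_pivot {m n R : Type*} [Fintype n] [LinearOrder n]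
    [NonUnitalNonAssocRing R] [NoZeroDivisors R] {B : Matrix m n R}
    (h : ∀ c, ∃ r, B r c ≠ 0 ∧ ∀ d < c, B r d = 0) : Function.Injective B.mulVec := by
  intro v w hvw
  by_contra hne
  obtain ⟨c, hc, hmax⟩ := (Set.toFinite {c | (v - w) c ≠ 0}).exists_maximal
    (Function.ne_iff.mp (sub_ne_zero.mpr hne))
  obtain ⟨r, hrc, hrow⟩ := h c
  have hBr : (B *ᵥ (v - w)) r = B r c * (v - w) c := by
    refine Finset.sum_eq_single c (fun d _ hdc => ?_) (fun hc' => absurd (Finset.mem_univ c) hc')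
    rcases hdc.lt_or_gt with hlt | hgt
    · simp [hrow d hlt]
    · have hd : (v - w) d = 0 := by
        by_contra hd
        exact hgt.not_ge (hmax hd hgt.le)
      simp [hd]
  rw [Matrix.mulVec_sub, sub_eq_zero.mpr hvw] at hBr
  exact mul_ne_zero hrc hc hBr.symm

theorem UnitarilySimilar.isConj {m : Type*} [Fintype m] [DecidableEq m] {A B : Matrix m m ℍ[ℝ]}
    (h : UnitarilySimilar A B) : IsConj A B := by
  obtain ⟨U, hU, rfl⟩ := h
  have hU' : U * Uᴴ = 1 := mul_eq_one_comm.mp hU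
  refine ⟨⟨U, Uᴴ, hU', hU⟩, ?_⟩
  simp [SemiconjBy, ← mul_assoc, hU']

section Blocks

variable {n s : ℕ} {sz : Fin s → ℕ}

/-- The bijection placing the `a`-th index of the `i`-th block of the partition `sz` of `n` at
position `psum sz i + a`. -/
def blockEquiv (h : ∑ i, sz i = n) : (Σ i, Fin (sz i)) ≃ Fin n :=
  finSigmaFinEquiv.trans (finCongr h)

/-- The block map of the partition `sz` of `n`, sending an index to the block containing it. -/
def blockIndex (h : ∑ i, sz i = n) (r : Fin n) : Fin s :=
  ((blockEquiv h).symm r).1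

variable (h : ∑ i, sz i = n)

@[simp]
theorem blockIndex_blockEquiv (p : Σ i, Fin (sz i)) : blockIndex h (blockEquiv h p) = p.1 := by
  simp [blockIndex]

theorem val_blockEquiv (p : Σ i, Fin (sz i)) : (blockEquiv h p : ℕ) = psum sz p.1 + p.2 := by
  have hlt (t : Fin p.1) : (t : ℕ) < s := t.2.trans p.1.2
  simp [blockEquiv, psum, Finset.sum_range, hlt, Fin.castLE]

theorem psum_succ (i : Fin s) : psum sz (i + 1) = psum sz i + sz i := by
  simp [psum, Finset.sum_range_succ]

theorem blockIndex_eq_iff_inBlock {r : Fin n} {i : Fin s} :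
    blockIndex h r = i ↔ InBlock sz i r := by
  constructor
  · rintro rfl
    obtain ⟨p, rfl⟩ := (blockEquiv h).surjective r
    rw [blockIndex_blockEquiv, InBlock, val_blockEquiv, psum_succ]
    omega
  · rintro ⟨hle, hlt⟩
    rw [psum_succ] at hlt
    have hr : r = blockEquiv h ⟨i, ⟨r - psum sz i, by omega⟩⟩ :=
      Fin.ext (by rw [val_blockEquiv]; dsimp only; omega)
    rw [hr, blockIndex_blockEquiv]

theorem card_blockIndex_eq (i : Fin s) : Fintype.card {r // blockIndex h r = i} = sz i := by
  let e : {r // blockIndex h r = i} ≃ Fin (sz i) :=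
    ((blockEquiv h).symm.subtypeEquiv fun _ => Iff.rfl).trans (Equiv.sigmaSubtype i)
  rw [Fintype.card_congr e, Fintype.card_fin]

end Blocks

namespace StrengthenedSchurForm

variable {n s : ℕ} {sz : Fin s → ℕ} {lam : Fin s → ℝ} {F : Matrix (Fin n) (Fin n) ℍ[ℝ]}

theorem sum_eq (hF : StrengthenedSchurForm s sz lam F) : ∑ i, sz i = n := hF.2.1

theorem exists_pivot_of_eq (hF : StrengthenedSchurForm s sz lam F) {i : Fin s}
    (hi : (i : ℕ) + 1 < s) (hlam : lam i = lam ⟨i + 1, hi⟩)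
    (c : {c // blockIndex hF.sum_eq c = ⟨i + 1, hi⟩}) :
    ∃ r : {r // blockIndex hF.sum_eq r = i}, F r c ≠ 0 ∧
      ∀ d : {d // blockIndex hF.sum_eq d = ⟨i + 1, hi⟩}, d < c → F r d = 0 := by
  obtain ⟨hsz, hsuper⟩ := hF.2.2.2.2.2 i hi hlam
  obtain ⟨c, hc⟩ := c
  rw [blockIndex_eq_iff_inBlock] at hc
  have hoffset : (c : ℕ) - psum sz (i + 1) < sz i := by
    have hlt : (c : ℕ) < psum sz (i + 1) + sz ⟨i + 1, hi⟩ :=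
      psum_succ (sz := sz) ⟨i + 1, hi⟩ ▸ hc.2
    have hle : psum sz (i + 1) ≤ c := hc.1
    omega
  let r : Fin n := blockEquiv hF.sum_eq ⟨i, ⟨c - psum sz (i + 1), hoffset⟩⟩
  have hr : (r : ℕ) - psum sz i = c - psum sz (i + 1) := by
    rw [val_blockEquiv, Nat.add_sub_cancel_left]
  have hri : blockIndex hF.sum_eq r = i := blockIndex_blockEquiv _ _
  have hrblock : InBlock sz i r := (blockIndex_eq_iff_inBlock _).mp hri
  refine ⟨⟨r, hri⟩, ?_, fun ⟨d, hd⟩ hdc => ?_⟩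
  · obtain ⟨β, hβ, hFβ⟩ := (hsuper r c hrblock hc).2 hr.symm
    rw [hFβ]
    exact Quaternion.coe_injective.ne hβ.ne'
  · rw [blockIndex_eq_iff_inBlock] at hd
    have hdc' : (d : ℕ) < c := hdc
    have hle : psum sz (i + 1) ≤ d := hd.1
    exact (hsuper r d hrblock hd).1 (by omega)

theorem isStaircaseForm (hF : StrengthenedSchurForm s sz lam F) :
    IsStaircaseForm (blockIndex hF.sum_eq) lam F := by
  obtain ⟨hpos, hsum, hanti, hlower, hdiag, -⟩ := id hF
  refine ⟨fun i => ⟨blockEquiv hsum ⟨i, 0, hpos i⟩, blockIndex_blockEquiv _ _⟩,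
    fun i j => hanti i j, fun r c hcr => ?_, fun i => ?_, fun i hi hlam => ?_⟩
  · exact hlower r c _ _ ((blockIndex_eq_iff_inBlock hsum).mp rfl)
      ((blockIndex_eq_iff_inBlock hsum).mp rfl) hcr
  · ext1 ⟨r, hr⟩ ⟨c, hc⟩
    rw [Matrix.toSquareBlock_def, Matrix.of_apply, hdiag r c i
      ((blockIndex_eq_iff_inBlock hsum).mp hr) ((blockIndex_eq_iff_inBlock hsum).mp hc)]
    by_cases hrc : r = c <;> simp [hrc, Algebra.smul_def]
  · exact mulVec_injective_of_forall_exists_pivot (hF.exists_pivot_of_eq hi hlam)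

end StrengthenedSchurForm

/-- **Uniqueness of the diagonal blocks in the strengthened Schur form.**
If `F` and `F'` are both unitarily similar to a matrix `A` with real spectrum and both are in
strengthened Schur form, then the numbers of blocks agree and the scalars and block sizes
agree; i.e., the diagonal blocks `λ_i • I_{n_i}` are uniquely determined by `A`. -/
theorem strengthened_schur_uniqueness {n : ℕ} (A : Matrix (Fin n) (Fin n) ℍ[ℝ])
    (hA : HasRealSpectrum A)
    {s s' : ℕ} {sz : Fin s → ℕ} {sz' : Fin s' → ℕ} {lam : Fin s → ℝ} {lam' : Fin s' → ℝ}
    {F F' : Matrix (Fin n) (Fin n) ℍ[ℝ]}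
    (hFA : UnitarilySimilar F A) (hF : StrengthenedSchurForm s sz lam F)
    (hFA' : UnitarilySimilar F' A) (hF' : StrengthenedSchurForm s' sz' lam' F') :
    s = s' ∧ ∀ (i : ℕ) (h : i < s) (h' : i < s'),
      lam ⟨i, h⟩ = lam' ⟨i, h'⟩ ∧ sz ⟨i, h⟩ = sz' ⟨i, h'⟩ := by
  simpa only [card_blockIndex_eq] using strengthened_schur_uniqueness_general
    (hFA.isConj.trans hFA'.isConj.symm) hF.isStaircaseForm hF'.isStaircaseForm
end
end
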